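/- Let k be an algebraically closed field of characteristic zero, let n ≥ 1 and m ≥ n be integers, and set q = ⌊m/n⌋. In the polynomial ring R = k[x_{i,c} : 1 ≤ i ≤ m, 1 ≤ c ≤ n], for each j = 0, …, q−1 let d_j be the determinant of the n × n matrix (x_{jn+r, c})_{1 ≤ r, c ≤ n}. Then the Krull dimension of the quotient ring R/(d₀, …, d_{q−1}) equals mn − q. -/

import Mathlib

/-!
Adding a variable `y` to every diagonal entry of an `n × n` matrix `N` turns its determinant into
the characteristic polynomial of `-N` at `y`, which is monic in `y`. A linear change of coordinates
that uses the upper left entry of each block as `y` therefore presents the quotient as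
`S[y_j] / (p_j(y_j))`, with `S` the polynomial ring in the remaining variables and each `p_j` monic
over `S`. It is integral over `S`, and over every point of `Spec S` one can choose roots of all the
`p_j` in an algebraically closed field, so every prime of `S` lifts. Hence both rings have the same
dimension, and `S` has one variable fewer for each block.
-/

open MvPolynomial

section IntegralExtension

variable {R S : Type*} [CommRing R] [CommRing S] [Algebra R S]

theorem ringKrullDim_le_of_isIntegral [Algebra.IsIntegral R S] :
    ringKrullDim S ≤ ringKrullDim R :=
  Order.krullDim_le_of_strictMono (PrimeSpectrum.comap (algebraMap R S)) fun _ _ hlt ↦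
    Ideal.IsIntegral.comap_lt_comap hlt

theorem ringKrullDim_le_of_hasGoingUp_of_comap_surjective [Algebra.HasGoingUp R S]
    (hsurj : Function.Surjective (PrimeSpectrum.comap (algebraMap R S))) :
    ringKrullDim R ≤ ringKrullDim S := by
  refine iSup_le fun chain ↦ ?_
  obtain ⟨P, hP⟩ := hsurj chain.head
  have : P.asIdeal.LiesOver chain.head.asIdeal := ⟨(congrArg PrimeSpectrum.asIdeal hP).symm⟩
  obtain ⟨lifted, hlength, -⟩ := Ideal.exists_ltSeries_of_hasGoingUp chain P.asIdeal
  exact hlength ▸ Order.LTSeries.length_le_krullDim lifted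

theorem ringKrullDim_eq_of_isIntegral_of_comap_surjective [Algebra.IsIntegral R S]
    (hsurj : Function.Surjective (PrimeSpectrum.comap (algebraMap R S))) :
    ringKrullDim S = ringKrullDim R :=
  le_antisymm ringKrullDim_le_of_isIntegral
    (ringKrullDim_le_of_hasGoingUp_of_comap_surjective hsurj)

end IntegralExtension

section AdjoinRoots

variable {S J : Type*} [CommRing S]

/-- The ideal `(p_j(X_j))_j` of `S[X_j : j ∈ J]`; the quotient by it freely adjoins to `S` one root
of every `p_j`. -/
noncomputable def rootsIdeal (p : J → Polynomial S) : Ideal (MvPolynomial J S) :=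
  Ideal.span (Set.range fun j ↦ Polynomial.aeval (X j) (p j))

variable {p : J → Polynomial S}

theorem aeval_mk_X_rootsIdeal (j : J) :
    Polynomial.aeval (Ideal.Quotient.mkₐ S (rootsIdeal p) (X j)) (p j) = 0 := by
  rw [Polynomial.aeval_algHom_apply]
  exact Ideal.Quotient.eq_zero_iff_mem.mpr (Ideal.subset_span ⟨j, rfl⟩)

theorem isIntegral_quotient_rootsIdeal (hp : ∀ j, (p j).Monic) :
    Algebra.IsIntegral S (MvPolynomial J S ⧸ rootsIdeal p) := by
  let mk := Ideal.Quotient.mkₐ S (rootsIdeal p)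
  have adjoin_eq_top : Algebra.adjoin S (mk '' Set.range X) = ⊤ := by
    rw [Algebra.adjoin_image, adjoin_range_X, Algebra.map_top, AlgHom.range_eq_top]
    exact Ideal.Quotient.mkₐ_surjective S _
  have adjoin_le : Algebra.adjoin S (mk '' Set.range X) ≤ integralClosure S _ := by
    refine Algebra.adjoin_le ?_
    rintro _ ⟨_, ⟨j, rfl⟩, rfl⟩
    exact ⟨p j, hp j, aeval_mk_X_rootsIdeal j⟩
  exact ⟨fun x ↦ adjoin_le (adjoin_eq_top ▸ Algebra.mem_top)⟩

theorem nonempty_algHom_quotient_rootsIdeal {K : Type*} [Field K] [IsAlgClosed K] [Algebra S K]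
    (hp : ∀ j, (p j).Monic) (hdeg : ∀ j, (p j).natDegree ≠ 0) :
    Nonempty (MvPolynomial J S ⧸ rootsIdeal p →ₐ[S] K) := by
  have exists_root (j : J) : ∃ y : K, Polynomial.aeval y (p j) = 0 := by
    simp only [Polynomial.aeval_def, Polynomial.eval₂_eq_eval_map]
    refine IsAlgClosed.exists_root _ ?_
    rw [(hp j).degree_map]
    exact mt Polynomial.natDegree_eq_of_degree_eq_some (hdeg j)
  choose y hy using exists_root
  have rootsIdeal_le_ker : rootsIdeal p ≤ RingHom.ker (aeval (R := S) y) := by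
    refine Ideal.span_le.mpr ?_
    rintro _ ⟨j, rfl⟩
    rw [SetLike.mem_coe, RingHom.mem_ker, ← Polynomial.aeval_algHom_apply, aeval_X, hy]
  exact ⟨Ideal.Quotient.liftₐ (rootsIdeal p) (aeval y) rootsIdeal_le_ker⟩

theorem comap_algebraMap_quotient_rootsIdeal_surjective
    (hp : ∀ j, (p j).Monic) (hdeg : ∀ j, (p j).natDegree ≠ 0) :
    Function.Surjective
      (PrimeSpectrum.comap (algebraMap S (MvPolynomial J S ⧸ rootsIdeal p))) := by
  intro P
  let K := AlgebraicClosure P.asIdeal.ResidueField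
  obtain ⟨φ⟩ := nonempty_algHom_quotient_rootsIdeal (K := K) hp hdeg
  refine ⟨⟨RingHom.ker φ, RingHom.ker_isPrime _⟩, PrimeSpectrum.ext ?_⟩
  calc (RingHom.ker φ).comap (algebraMap S _)
      = RingHom.ker (algebraMap S K) := by
        rw [← φ.comp_algebraMap]; rfl
    _ = P.asIdeal := by
        rw [IsScalarTower.algebraMap_eq S P.asIdeal.ResidueField K, RingHom.ker_comp_of_injective,
          Ideal.ker_algebraMap_residueField]
        exact RingHom.injective _

theorem ringKrullDim_quotient_rootsIdeal
    (hp : ∀ j, (p j).Monic) (hdeg : ∀ j, (p j).natDegree ≠ 0) :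
    ringKrullDim (MvPolynomial J S ⧸ rootsIdeal p) = ringKrullDim S :=
  have := isIntegral_quotient_rootsIdeal hp
  ringKrullDim_eq_of_isIntegral_of_comap_surjective
    (comap_algebraMap_quotient_rootsIdeal_surjective hp hdeg)

end AdjoinRoots

section Shear

variable {R σ J : Type*} [CommRing R]

variable (R) in
open Classical in
/-- The coordinate `X s` with the variables in the range of `π` set to zero, as a polynomial in the
variables outside that range. -/
noncomputable def killRange (π : J → σ) (s : σ) : MvPolynomial {s // s ∉ Set.range π} R :=
  if h : s ∈ Set.range π then 0 else X ⟨s, h⟩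

theorem killRange_apply_self (π : J → σ) (j : J) : killRange R π (π j) = 0 :=
  dif_pos ⟨j, rfl⟩

theorem killRange_of_notMem (π : J → σ) (s : {s // s ∉ Set.range π}) :
    killRange R π s = X s :=
  dif_neg s.2

variable (π : J → σ) (a : σ → MvPolynomial J R)

/-- The substitution `X s ↦ a s + X s`, where `X s` is first set to zero if `s` lies in the range of
`π`. The variables `J` of `a s` are kept apart from those outside the range of `π`, which move into
the coefficient ring. -/
noncomputable def shear :
    MvPolynomial σ R →ₐ[R] MvPolynomial J (MvPolynomial {s // s ∉ Set.range π} R) :=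
  aeval fun s ↦ map C (a s) + C (killRange R π s)

/-- The substitution `X j ↦ X (π j)` and `X s ↦ X s - a s`, with `a s` rewritten in the variables
`X (π j)`. It inverts `shear π a` as soon as `a (π j) = X j` for all `j`. -/
noncomputable def unshear :
    MvPolynomial J (MvPolynomial {s // s ∉ Set.range π} R) →ₐ[R] MvPolynomial σ R :=
  aevalTower (aeval fun s ↦ X s.1 - rename π (a s)) fun j ↦ X (π j)

theorem shear_X (s : σ) : shear π a (X s) = map C (a s) + C (killRange R π s) :=
  aeval_X _ _

theorem unshear_map_C (f : MvPolynomial J R) : unshear π a (map C f) = rename π f := by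
  induction f using MvPolynomial.induction_on <;> simp_all [unshear, algebraMap_eq]

variable {a}

theorem shear_rename (ha : ∀ j, a (π j) = X j) (f : MvPolynomial J R) :
    shear π a (rename π f) = map C f := by
  induction f using MvPolynomial.induction_on with
  | C r => simp [shear, algebraMap_eq]
  | add f g hf hg => simp only [map_add, hf, hg]
  | mul_X f j hf => simp [hf, shear_X, ha, killRange_apply_self]

/-- The triangular change of coordinates `shear π a`, as an isomorphism with inverse
`unshear π a`. -/
noncomputable def shearEquiv (ha : ∀ j, a (π j) = X j) :
    MvPolynomial σ R ≃ₐ[R] MvPolynomial J (MvPolynomial {s // s ∉ Set.range π} R) :=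
  AlgEquiv.ofAlgHom (shear π a) (unshear π a)
    (by
      ext s : 2
      · ext s : 1
        simp [unshear, shear_X, shear_rename π ha, killRange_of_notMem]
      · simp [unshear, shear_X, killRange_apply_self, ha])
    (by
      ext s : 1
      by_cases hs : s ∈ Set.range π
      · obtain ⟨j, rfl⟩ := hs
        simp [shear_X, unshear, killRange_apply_self, ha]
      · have unshear_killRange :
            unshear π a (C (killRange R π s)) = X s - rename π (a s) := by
          simp [killRange_of_notMem π ⟨s, hs⟩, unshear]
        simp [shear_X, unshear_map_C, unshear_killRange])

theorem shearEquiv_X (ha : ∀ j, a (π j) = X j) (s : σ) :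
    shearEquiv π ha (X s) = map C (a s) + C (killRange R π s) :=
  shear_X π a s

end Shear

theorem natCard_compl_range {σ J : Type*} [Finite σ] {f : J → σ} (hf : Function.Injective f) :
    Nat.card {s // s ∉ Set.range f} = Nat.card σ - Nat.card J := by
  rw [← Nat.card_range_of_injective hf]
  exact Set.ncard_compl (Set.range f)

section GenericBlocks

variable {R σ J ι : Type*} [CommRing R]

variable (R) in
/-- The generic matrix whose `(r, c)` entry is the variable `e (j, r, c)`. -/
noncomputable def genericBlock (e : J × ι × ι → σ) (j : J) : Matrix ι ι (MvPolynomial σ R) :=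
  Matrix.of fun r c ↦ X (e (j, r, c))

variable [Fintype ι] [DecidableEq ι]

theorem aeval_charpoly_neg {A B : Type*} [CommRing A] [CommRing B] [Algebra A B]
    (N : Matrix ι ι A) (y : B) :
    Polynomial.aeval y (-N).charpoly = (Matrix.scalar ι y + N.map (algebraMap A B)).det := by
  rw [Polynomial.aeval_def, Polynomial.eval₂_eq_eval_map, ← Matrix.charpoly_map,
    Matrix.eval_charpoly]
  congr 1
  ext r c
  simp

variable {e : J × ι × ι → σ}

theorem exists_algEquiv_det_genericBlock_eq_aeval_charpoly (he : Function.Injective e) (z : ι) :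
    ∃ (N : J → Matrix ι ι (MvPolynomial {s // s ∉ Set.range fun j ↦ e (j, z, z)} R))
      (Φ : MvPolynomial σ R ≃ₐ[R]
        MvPolynomial J (MvPolynomial {s // s ∉ Set.range fun j ↦ e (j, z, z)} R)),
      ∀ j, Φ (genericBlock R e j).det = Polynomial.aeval (X j) (-N j).charpoly := by
  let diagonalShift : σ → MvPolynomial J R :=
    Function.extend e (fun p ↦ if p.2.1 = p.2.2 then X p.1 else 0) 0
  have diagonalShift_apply (j : J) (r c : ι) :
      diagonalShift (e (j, r, c)) = if r = c then X j else 0 :=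
    he.extend_apply _ _ _
  let pivot : J → σ := fun j ↦ e (j, z, z)
  let Φ := shearEquiv (a := diagonalShift) pivot fun j ↦ by simp [pivot, diagonalShift_apply]
  refine ⟨fun j ↦ Matrix.of fun r c ↦ killRange R pivot (e (j, r, c)), Φ, fun j ↦ ?_⟩
  rw [aeval_charpoly_neg, AlgEquiv.map_det]
  congr 1
  ext r c : 1
  simp [genericBlock, Φ, shearEquiv_X, diagonalShift_apply, Matrix.diagonal_apply, apply_ite]

theorem ringKrullDim_quotient_span_det_genericBlock (he : Function.Injective e) (z : ι) :
    ringKrullDim (MvPolynomial σ R ⧸ Ideal.span (Set.range fun j ↦ (genericBlock R e j).det)) =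
      ringKrullDim (MvPolynomial {s // s ∉ Set.range fun j ↦ e (j, z, z)} R) := by
  nontriviality R
  obtain ⟨N, Φ, hΦ⟩ := exists_algEquiv_det_genericBlock_eq_aeval_charpoly (R := R) he z
  have map_span : rootsIdeal (fun j ↦ (-N j).charpoly) =
      (Ideal.span (Set.range fun j ↦ (genericBlock R e j).det)).map (Φ : _ →+* _) := by
    rw [rootsIdeal, Ideal.map_span, ← Set.range_comp]
    exact congrArg (fun f ↦ Ideal.span (Set.range f)) (funext fun j ↦ (hΦ j).symm)
  have natDegree_charpoly_ne_zero (j : J) : (-N j).charpoly.natDegree ≠ 0 := by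
    have : Nonempty ι := ⟨z⟩
    rw [Matrix.charpoly_natDegree_eq_dim]
    exact Fintype.card_ne_zero
  calc ringKrullDim (MvPolynomial σ R ⧸ Ideal.span (Set.range fun j ↦ (genericBlock R e j).det))
      = ringKrullDim (MvPolynomial J _ ⧸ rootsIdeal fun j ↦ (-N j).charpoly) :=
        ringKrullDim_eq_of_ringEquiv (Ideal.quotientEquiv _ _ Φ.toRingEquiv map_span)
    _ = _ := ringKrullDim_quotient_rootsIdeal (fun j ↦ Matrix.charpoly_monic _)
        natDegree_charpoly_ne_zero

theorem ringKrullDim_quotient_span_det_genericBlock_of_isNoetherianRing [IsNoetherianRing R]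
    [Finite σ] [Nonempty ι] (he : Function.Injective e) :
    ringKrullDim (MvPolynomial σ R ⧸ Ideal.span (Set.range fun j ↦ (genericBlock R e j).det)) =
      ringKrullDim R + (Nat.card σ - Nat.card J : ℕ) := by
  obtain ⟨z⟩ := ‹Nonempty ι›
  have pivot_injective : Function.Injective fun j ↦ e (j, z, z) :=
    fun _ _ h ↦ congrArg Prod.fst (he h)
  rw [ringKrullDim_quotient_span_det_genericBlock he z, ringKrullDim_of_isNoetherianRing,
    natCard_compl_range pivot_injective]

end GenericBlocks

/-- The row `j * n + r` of an `m`-row array, i.e. row `r` of the `j`-th of its `m / n` consecutive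
blocks of `n` rows, counting from zero. -/
def blockRow {m n : ℕ} (j : Fin (m / n)) (r : Fin n) : Fin m :=
  ⟨j * n + r, by
    calc (j : ℕ) * n + r < (j + 1) * n := by rw [add_one_mul]; gcongr; exact r.isLt
      _ ≤ m / n * n := Nat.mul_le_mul_right n j.isLt
      _ ≤ m := Nat.div_mul_le_self m n⟩

theorem blockRow_injective {m n : ℕ} :
    Function.Injective fun p : Fin (m / n) × Fin n ↦ blockRow p.1 p.2 := by
  rintro ⟨j, r⟩ ⟨j', r'⟩ h
  refine finProdFinEquiv.injective (Fin.ext ?_)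
  simpa [blockRow, add_comm, mul_comm] using h

theorem krullDim_quotient_block_determinants_general
    (R : Type*) [CommRing R] [IsNoetherianRing R] (n m : ℕ) (hn : 1 ≤ n) :
    ringKrullDim
      (MvPolynomial (Fin m × Fin n) R ⧸
        Ideal.span (Set.range fun j : Fin (m / n) ↦
          Matrix.det (Matrix.of fun r c : Fin n ↦
            (X (blockRow j r, c) : MvPolynomial (Fin m × Fin n) R)))) =
      ringKrullDim R + (m * n - m / n : ℕ) := by
  have : Nonempty (Fin n) := ⟨⟨0, hn⟩⟩
  let e : Fin (m / n) × Fin n × Fin n → Fin m × Fin n := fun p ↦ (blockRow p.1 p.2.1, p.2.2)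
  have he : Function.Injective e := by
    rintro ⟨j, r, c⟩ ⟨j', r', c'⟩ h
    have := @blockRow_injective m n (j, r) (j', r') (congrArg Prod.fst h)
    simp_all [e]
  simpa using! ringKrullDim_quotient_span_det_genericBlock_of_isNoetherianRing (R := R) he

/-- Let `k` be an algebraically closed field of characteristic zero, `n ≥ 1`, `m ≥ n`, and
`q = ⌊m/n⌋`. In `R = k[x_{i,c} : 0 ≤ i < m, 0 ≤ c < n]`, for `0 ≤ j < q` let `d_j` be the
determinant of the `n × n` matrix `(x_{j·n + r, c})_{r,c}`. Then the Krull dimension of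
`R/(d₀, …, d_{q−1})` is `m·n − q`. -/
theorem krullDim_quotient_block_determinants
    (k : Type) [Field k] [IsAlgClosed k] [CharZero k]
    (n m : ℕ) (hn : 1 ≤ n) (hm : n ≤ m) :
    ringKrullDim
      (MvPolynomial (Fin m × Fin n) k ⧸
        (Ideal.span (Set.range fun j : Fin (m / n) =>
          Matrix.det (Matrix.of fun r c : Fin n =>
            MvPolynomial.X
              ((⟨(j : ℕ) * n + (r : ℕ), by
                  calc (j : ℕ) * n + (r : ℕ) < (j : ℕ) * n + n :=
                        Nat.add_lt_add_left r.isLt _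
                    _ = ((j : ℕ) + 1) * n := by ring
                    _ ≤ (m / n) * n := Nat.mul_le_mul_right n j.isLt
                    _ ≤ m := Nat.div_mul_le_self m n⟩ : Fin m), c))) :
          Ideal (MvPolynomial (Fin m × Fin n) k)))
      = ((m * n - m / n : ℕ) : WithBot ℕ∞) := by
  simpa using! krullDim_quotient_block_determinants_general k n m hn
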